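/- Let m ≥ 2 and 0 < l ≤ m be integers and Δ > 1. There is a constant C, depending only on Δ and m, such that the following holds. Let J be a real 2m×m matrix whose blocks J^0, J^1 are invertible, whose rows satisfy J^0_h = J^1_h for 1 ≤ h ≤ l, and such that Π_j Π^T is Δ-regular for every j ∈ 𝒞, where Π := Π^J. Then for all j ∈ 𝒞 and all ξ ∈ ℝ^m one has |Π^T Θ̃ ξ| ≤ C |Θ̃ Π_j Π^T Θ̃ ξ| ≤ C |Θ Π^T Θ̃ ξ|. -/

import Mathlib

open MeasureTheory Matrix
open scoped ENNReal NNReal BigOperators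

noncomputable section

namespace SBL

/-- The set of corners of the `m`-dimensional cube: functions `{1,…,m} → {0,1}`. -/
abbrev Corner (m : ℕ) := Fin m → Fin 2

/-- Index type for `ℝ^{2m}`: coordinates `x^0_i` (left) and `x^1_i` (right). -/
abbrev Idx (m : ℕ) := Fin m ⊕ Fin m

/-- The coordinate of `ℝ^{2m}` selected by the corner `j` at position `i`. -/
def sel {m : ℕ} (j : Corner m) (i : Fin m) : Idx m :=
  if j i = 0 then Sum.inl i else Sum.inr i

/-- The projection `Π_j : ℝ^{2m} → ℝ^m`, `Π_j x = (x_1^{j(1)},…,x_m^{j(m)})`. -/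
def proj {m : ℕ} (j : Corner m) (x : Idx m → ℝ) : Fin m → ℝ := fun i => x (sel j i)

/-- The projection `Π_j` as an `m × 2m` matrix. -/
def projM {m : ℕ} (j : Corner m) : Matrix (Fin m) (Idx m) ℝ :=
  Matrix.of fun i k => if k = sel j i then 1 else 0

/-- `A_j := Π_j J`, the `m × m` matrix obtained by applying `Π_j` to (the columns of) a
`2m × m` matrix `J`, i.e. selecting rows of `J` according to the corner `j`. -/
def Amat {m : ℕ} (J : Matrix (Idx m) (Fin m) ℝ) (j : Corner m) : Matrix (Fin m) (Fin m) ℝ :=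
  Matrix.of fun i k => J (sel j i) k

/-- Euclidean norm on a finite pi type. -/
def en {ι : Type*} [Fintype ι] (x : ι → ℝ) : ℝ := Real.sqrt (∑ i, (x i) ^ 2)

/-- Operator norm of a matrix with respect to the Euclidean norms. -/
def opNorm {ι κ : Type*} [Fintype ι] [Fintype κ] [DecidableEq κ] (A : Matrix ι κ ℝ) : ℝ :=
  ‖LinearMap.toContinuousLinearMap (Matrix.toEuclideanLin A)‖

/-- `Δ`-regularity of a square matrix: `max(‖A‖, |det A|⁻¹) ≤ Δ` (in particular `det A ≠ 0`). -/
def IsReg {m : ℕ} (Δ : ℝ) (A : Matrix (Fin m) (Fin m) ℝ) : Prop :=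
  opNorm A ≤ Δ ∧ A.det ≠ 0 ∧ |A.det|⁻¹ ≤ Δ

/-- A Calderón–Zygmund kernel of order `n` in `ℝ^m`, given by its multiplier `K̂` on
`ℝ^m ∖ {0}`: it is `n` times continuously differentiable there and satisfies the symbol
estimates `‖D^k K̂(η)‖ ≤ |η|^{-k}` for all `k ≤ n`. -/
def IsCZ {m : ℕ} (n : ℕ) (Khat : (Fin m → ℝ) → ℂ) : Prop :=
  ContDiffOn ℝ n Khat {0}ᶜ ∧
  ∀ k : ℕ, k ≤ n → ∀ η : Fin m → ℝ, η ≠ 0 →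
    ‖iteratedFDerivWithin ℝ k Khat {0}ᶜ η‖ ≤ (en η) ^ (-(k : ℝ))

/-- Fourier transform of a (nice) function on `ℝ^{2m}`. -/
def fourierT {m : ℕ} (φ : (Idx m → ℝ) → ℝ) (ξ : Idx m → ℝ) : ℂ :=
  ∫ x : Idx m → ℝ, Complex.exp (-2 * Real.pi * Complex.I * (∑ k, x k * ξ k)) * (φ x : ℂ)

/-- The principal value `p.v. ∫_{ℝ^{2m}} (∏_j F_j(Π_j x)) K(Πx) dx`, defined as
`∫_{ℝ^m} φ̂(−Π^T η) K̂(η) dη` with `φ = ∏_j F_j ∘ Π_j`. -/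
def pv {m : ℕ} (P : Matrix (Fin m) (Idx m) ℝ) (Khat : (Fin m → ℝ) → ℂ)
    (F : Corner m → (Fin m → ℝ) → ℝ) : ℂ :=
  ∫ η : Fin m → ℝ, fourierT (fun x => ∏ j, F j (proj j x)) (-(P.transpose.mulVec η)) * Khat η

/-- Upper `m×m` block `J^0` of a `2m×m` matrix. -/
def Jb0 {m : ℕ} (J : Matrix (Idx m) (Fin m) ℝ) : Matrix (Fin m) (Fin m) ℝ :=
  J.submatrix Sum.inl id

/-- Lower `m×m` block `J^1` of a `2m×m` matrix. -/
def Jb1 {m : ℕ} (J : Matrix (Idx m) (Fin m) ℝ) : Matrix (Fin m) (Fin m) ℝ :=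
  J.submatrix Sum.inr id

/-- `Π^J := (I, −J^0 (J^1)⁻¹)`. -/
def PiJ {m : ℕ} (J : Matrix (Idx m) (Fin m) ℝ) : Matrix (Fin m) (Idx m) ℝ :=
  Matrix.fromCols 1 (-(Jb0 J * (Jb1 J)⁻¹))

/-- The dyadic cube with parameters `Q = (k, n)`: `∏_i [2^k n_i, 2^k (n_i+1))`. -/
def dC {m : ℕ} (Q : ℤ × (Fin m → ℤ)) : Set (Fin m → ℝ) :=
  {x | ∀ i, (2:ℝ)^Q.1 * (Q.2 i : ℝ) ≤ x i ∧ x i < (2:ℝ)^Q.1 * ((Q.2 i : ℝ) + 1)}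

/-- `Q*`: the cube with the same center as `Q` and three times the side length. -/
def dCstar {m : ℕ} (Q : ℤ × (Fin m → ℤ)) : Set (Fin m → ℝ) :=
  {x | ∀ i, (2:ℝ)^Q.1 * ((Q.2 i : ℝ) - 1) ≤ x i ∧ x i < (2:ℝ)^Q.1 * ((Q.2 i : ℝ) + 2)}

/-- A (1/2-)sparse collection of dyadic cubes. -/
def IsSparse {m : ℕ} (S : Set (ℤ × (Fin m → ℤ))) : Prop :=
  ∀ Q ∈ S,
    (∑' Q' : {q : ℤ × (Fin m → ℤ) // q ∈ S ∧ dC q ⊆ dC Q}, volume (dC Q'.val)) ≤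
      2 * volume (dC Q)

/-- The average `[F]_S := (|S|⁻¹ ∫_S |F|^{2^{m-1}})^{2^{1-m}}`. -/
def avg {m : ℕ} (S : Set (Fin m → ℝ)) (F : (Fin m → ℝ) → ℝ) : ℝ :=
  (((volume S).toReal)⁻¹ * ∫ x in S, |F x| ^ (2^(m-1) : ℕ)) ^ ((2:ℝ) ^ ((1:ℤ) - (m:ℤ)))

/-- The closed axis-parallel box `∏_i [a_i, b_i]`. -/
def box {m : ℕ} (a b : Fin m → ℝ) : Set (Fin m → ℝ) := {x | ∀ i, a i ≤ x i ∧ x i ≤ b i}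

/-- Reciprocal eccentricity `ε_R = (min_i |I_i|)/(max_i |I_i|)` of the box `∏_i [a_i,b_i]`. -/
def ecc {m : ℕ} (a b : Fin m → ℝ) : ℝ := (⨅ i, (b i - a i)) / (⨆ i, (b i - a i))

/-- Modified strong maximal function evaluated on a set `S`:
`sup { (ε_R^α)^{2^{1-m}} [F]_R : R ∈ ℛ, S ⊆ R }` (as an extended real). -/
def Mal {m : ℕ} (α : ℝ) (F : (Fin m → ℝ) → ℝ) (S : Set (Fin m → ℝ)) : ℝ≥0∞ :=
  ⨆ (a : Fin m → ℝ) (b : Fin m → ℝ) (_ : ∀ i, a i < b i) (_ : S ⊆ box a b),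
    ENNReal.ofReal ((ecc a b ^ α) ^ ((2:ℝ) ^ ((1:ℤ) - (m:ℤ))) * avg (box a b) F)

/-- `M_α(F)(A𝒯) := sup_{Q ∈ 𝒯} M_α(F)(AQ)`. -/
def MalTree {m : ℕ} (α : ℝ) (F : (Fin m → ℝ) → ℝ) (A : Matrix (Fin m) (Fin m) ℝ)
    (T : Set (ℤ × (Fin m → ℤ))) : ℝ≥0∞ :=
  ⨆ Q ∈ T, Mal α F (A.mulVec '' dC Q)

/-- A convex tree of dyadic cubes with top cube `Qt`. -/
def ConvexTree {m : ℕ} (T : Set (ℤ × (Fin m → ℤ))) (Qt : ℤ × (Fin m → ℤ)) : Prop :=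
  Qt ∈ T ∧ (∀ Q ∈ T, dC Q ⊆ dC Qt) ∧
  ∀ Q ∈ T, ∀ Q' : ℤ × (Fin m → ℤ), dC Q ⊆ dC Q' → dC Q' ⊆ dC Qt → Q' ∈ T

/-- The Gaussian `g(x) = e^{−π|x|²}` on `ℝ^{2m}`. -/
def gss {m : ℕ} (x : Idx m → ℝ) : ℝ := Real.exp (-Real.pi * ∑ k, (x k) ^ 2)

/-- The mixed partial derivative `∂^0_i ∂^1_i g`. -/
def ddg {m : ℕ} (i : Fin m) (x : Idx m → ℝ) : ℝ :=
  fderiv ℝ (fun y : Idx m → ℝ => fderiv ℝ gss y (Pi.single (Sum.inl i) (1:ℝ))) x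
    (Pi.single (Sum.inr i) (1:ℝ))

/-- Isotropic `L¹` dilation on `ℝ^{2m}`: `φ_t(x) = t^{-2m} φ(t⁻¹ x)`. -/
def dil {m : ℕ} (t : ℝ) (φ : (Idx m → ℝ) → ℝ) (x : Idx m → ℝ) : ℝ :=
  (t ^ (2*m))⁻¹ * φ (t⁻¹ • x)

/-- Matrix dilation: `φ_D(x) = (det D)⁻¹ φ(D⁻¹ x)`. -/
def dilM {m : ℕ} (D : Matrix (Idx m) (Idx m) ℝ) (φ : (Idx m → ℝ) → ℝ) (x : Idx m → ℝ) : ℝ :=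
  (D.det)⁻¹ * φ (D⁻¹.mulVec x)

/-- The region `Ω_𝒯 = ∪_{Q∈𝒯} Q × (ℓ(Q)/2, ℓ(Q))` in the upper half space. -/
def Omega {m : ℕ} (T : Set (ℤ × (Fin m → ℤ))) : Set ((Fin m → ℝ) × ℝ) :=
  ⋃ Q ∈ T, (dC Q) ×ˢ Set.Ioo ((2:ℝ)^Q.1 / 2) ((2:ℝ)^Q.1)

/-- The localized form `Λ_𝒯((F_j)_j)`. -/
def LambdaT {m : ℕ} (J : Matrix (Idx m) (Fin m) ℝ) (T : Set (ℤ × (Fin m → ℤ)))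
    (c : ℝ → ℂ) (u : Idx m → ℝ) (i : Fin m) (F : Corner m → (Fin m → ℝ) → ℝ) : ℂ :=
  ∫ z in Omega T, c z.2 * Complex.ofReal ((1 + en u ^ (4*m))⁻¹ * (z.2)⁻¹ *
    ∫ x : Idx m → ℝ, (∏ j, F j (proj j x)) * dil z.2 (ddg i) (x - J.mulVec z.1 + z.2 • u))

/-- `T_k := ∪ {Q ∈ 𝒯 : ℓ(Q) = 2^k}`. -/
def Tkset {m : ℕ} (T : Set (ℤ × (Fin m → ℤ))) (k : ℤ) : Set (Fin m → ℝ) :=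
  ⋃ Q ∈ {q ∈ T | q.1 = k}, dC Q

/-- The form `Λ̃_𝒯((F_j)_j)` with localization in the `x` variables. -/
def LambdaTilde {m : ℕ} (J : Matrix (Idx m) (Fin m) ℝ) (T : Set (ℤ × (Fin m → ℤ)))
    (c : ℝ → ℂ) (u : Idx m → ℝ) (i : Fin m) (F : Corner m → (Fin m → ℝ) → ℝ) : ℂ :=
  ∑' k : ℤ, ∫ t in Set.Ioc ((2:ℝ)^(k-1)) ((2:ℝ)^k),
    c t * Complex.ofReal ((1 + en u ^ (4*m))⁻¹ * t⁻¹ *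
      ∫ p : Fin m → ℝ, ∫ x : Idx m → ℝ,
        (∏ j, Set.indicator ((Amat J j).mulVec '' Tkset T k) (F j) (proj j x)) *
          dil t (ddg i) (x - J.mulVec p + t • u))

/-- The form `Λ(𝒯,J,K)((F_j)_j)` from the induction proposition. -/
def LambdaK {m : ℕ} (J : Matrix (Idx m) (Fin m) ℝ) (T : Set (ℤ × (Fin m → ℤ)))
    (K : ℝ → (Idx m → ℝ) → ℂ) (F : Corner m → (Fin m → ℝ) → ℝ) : ℂ :=
  ∑' k : ℤ, ∫ x : Idx m → ℝ,
    Complex.ofReal (∏ j, Set.indicator ((Amat J j).mulVec '' Tkset T k) (F j) (proj j x)) *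
      ∫ t in Set.Ioc ((2:ℝ)^(k-1)) ((2:ℝ)^k), K t x * (t : ℂ)⁻¹

/-- The reflected corner `i∗j`, differing from `j` exactly at position `i`. -/
def istar {m : ℕ} (i : Fin m) (j : Corner m) : Corner m :=
  fun k => if k = i then 1 - j i else j k

/-- The diagonal matrix `Θ̃` with entry 0 at positions `i ≤ l` and 1 at positions `i > l`
(1-based), i.e. 0 for `i < l` and 1 otherwise in 0-based indexing. -/
def Th {m : ℕ} (l : ℕ) : Matrix (Fin m) (Fin m) ℝ :=
  Matrix.diagonal fun i => if (i : ℕ) < l then 0 else 1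

/-- The block diagonal matrix `Θ = diag(Θ̃, Θ̃)`. -/
def ThB {m : ℕ} (l : ℕ) : Matrix (Idx m) (Idx m) ℝ :=
  Matrix.diagonal (Sum.elim (fun i : Fin m => if (i:ℕ) < l then (0:ℝ) else 1)
    (fun i : Fin m => if (i:ℕ) < l then (0:ℝ) else 1))

end SBL

namespace SBL

/-!
Write `Π` for `PiJ J` and `A` for `Π_j Πᵀ`. The first `l` rows of `J^0` and `J^1` agree, so
`Πᵀ y = (y, -y)` whenever `y` is supported on the first `l` coordinates. Hence `A` maps `ker Θ̃`
to itself, and a lower bound for `A` passes to its compression `Θ̃ A Θ̃`. For a `Δ`-regular `A`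
the lower bound is `|v| ≤ |det A|⁻¹ ‖A‖^(m-1) |A v| ≤ Δ^m |A v|`, by Hadamard's inequality.
Finally the two halves of `Πᵀ x` are `Π_0 Πᵀ x` and `Π_1 Πᵀ x` for the two constant corners, so
`|Πᵀ x| ≤ 2 Δ |x|`.
-/

section Operator

open Module (finrank)
open scoped InnerProductSpace

variable {𝕜 E : Type*} [RCLike 𝕜] [NormedAddCommGroup E] [InnerProductSpace 𝕜 E]

/-- Hadamard's inequality: the Gram–Schmidt basis of the image vectors makes their matrix
triangular. -/
theorem norm_det_le_prod_norm_apply {ι : Type*} [Fintype ι] (b : OrthonormalBasis ι 𝕜 E)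
    (T : E →ₗ[𝕜] E) : ‖LinearMap.det T‖ ≤ ∏ i, ‖T (b i)‖ := by
  classical
  have : FiniteDimensional 𝕜 E := b.toBasis.finiteDimensional_of_finite
  let _ : LinearOrder ι := LinearOrder.lift' _ (Fintype.equivFin ι).injective
  let _ : LocallyFiniteOrderBot ι := LocallyFiniteOrderBot.ofIic ι (fun a => {i | i ≤ a}) (by simp)
  let g := InnerProductSpace.gramSchmidtOrthonormalBasis
    (Module.finrank_eq_card_basis b.toBasis) (T ∘ b)
  calc ‖LinearMap.det T‖
      = ‖b.toBasis.det (T ∘ b)‖ := by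
        rw [← b.coe_toBasis, Module.Basis.det_comp, Module.Basis.det_self, mul_one]
    _ = ‖g.toBasis.det (T ∘ b)‖ := by
        rw [b.toBasis.det.eq_smul_basis_det g.toBasis, AlternatingMap.smul_apply, smul_eq_mul,
          norm_mul, g.coe_toBasis, b.det_to_matrix_orthonormalBasis g, one_mul]
    _ = ∏ i, ‖⟪g i, T (b i)⟫_𝕜‖ := by
        rw [InnerProductSpace.gramSchmidtOrthonormalBasis_det, norm_prod]
        rfl
    _ ≤ ∏ i, ‖T (b i)‖ := by
        gcongr with i
        simpa using norm_inner_le_norm (𝕜 := 𝕜) (g i) (T (b i))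

theorem exists_orthonormalBasis_apply_eq {ι : Type*} [Fintype ι]
    (hι : finrank 𝕜 E = Fintype.card ι) {u : E} (hu : ‖u‖ = 1) (i : ι) :
    ∃ b : OrthonormalBasis ι 𝕜 E, b i = u := by
  have : FiniteDimensional 𝕜 E := .of_finrank_pos (hι ▸ Fintype.card_pos_iff.2 ⟨i⟩)
  have hortho : Orthonormal 𝕜 (({i} : Set ι).domRestrict fun _ => u) := by simp [hu]
  obtain ⟨b, hb⟩ := hortho.exists_orthonormalBasis_extension_of_card_eq hι
  exact ⟨b, hb i rfl⟩

theorem norm_symmetricProjection_apply_le {θ : E →ₗ[𝕜] E} (hθ : θ.IsSymmetricProjection)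
    (v : E) : ‖θ v‖ ≤ ‖v‖ := by
  obtain ⟨_, hproj⟩ := LinearMap.isSymmetricProjection_iff_eq_coe_starProjection_range.1 hθ
  rw [hproj]
  exact Submodule.norm_starProjection_apply_le _ v

variable [FiniteDimensional 𝕜 E]

theorem norm_det_mul_norm_le (T : E →L[𝕜] E) (v : E) :
    ‖LinearMap.det (T : E →ₗ[𝕜] E)‖ * ‖v‖ ≤ ‖T‖ ^ (finrank 𝕜 E - 1) * ‖T v‖ := by
  obtain rfl | hv := eq_or_ne v 0
  · simp
  have : Nontrivial E := ⟨v, 0, hv⟩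
  obtain ⟨n, hn⟩ := Nat.exists_eq_add_one_of_ne_zero (Module.finrank_pos (R := 𝕜) (M := E)).ne'
  obtain ⟨b, hb⟩ := exists_orthonormalBasis_apply_eq (hn.trans (Fintype.card_fin _).symm)
    (norm_smul_inv_norm (𝕜 := 𝕜) hv) 0
  calc ‖LinearMap.det (T : E →ₗ[𝕜] E)‖ * ‖v‖
      ≤ (∏ i, ‖T (b i)‖) * ‖v‖ := by
        gcongr
        exact norm_det_le_prod_norm_apply b T
    _ = (∏ i : Fin n, ‖T (b i.succ)‖) * ‖T v‖ := by
        rw [Fin.prod_univ_succ, hb, map_smul, norm_smul, norm_inv, RCLike.norm_coe_norm]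
        field [norm_ne_zero_iff.2 hv]
    _ ≤ ‖T‖ ^ (finrank 𝕜 E - 1) * ‖T v‖ := by
        rw [hn, Nat.add_sub_cancel, ← Fin.prod_const]
        gcongr with i
        simpa using T.le_opNorm (b i.succ)

/-- The part of `T (θ ξ)` in `ker θ` equals `T s` for some `s ∈ ker θ`, as `T` maps `ker θ` onto
itself; subtracting `s` from `θ ξ` then removes that part and can only increase the norm. -/
theorem norm_symmetricProjection_apply_le_compression {θ T : E →ₗ[𝕜] E} {K : ℝ}
    (hθ : θ.IsSymmetricProjection) (hT : ∀ v, ‖v‖ ≤ K * ‖T v‖)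
    (hker : ∀ u ∈ LinearMap.ker θ, T u ∈ LinearMap.ker θ) (ξ : E) :
    ‖θ ξ‖ ≤ K * ‖θ (T (θ ξ))‖ := by
  have hθθ (v : E) : θ (θ v) = θ v := LinearMap.congr_fun hθ.isIdempotentElem v
  have hinj : Function.Injective T := (injective_iff_map_eq_zero T).2 fun v hv => by
    simpa [hv] using hT v
  have hsurj : Function.Surjective (T.restrict hker) :=
    LinearMap.injective_iff_surjective.1 fun u v huv =>
      Subtype.ext (hinj (congrArg Subtype.val huv))
  have hy : T (θ ξ) - θ (T (θ ξ)) ∈ LinearMap.ker θ := by simp [hθθ]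
  obtain ⟨⟨s, hs⟩, hsy⟩ := hsurj ⟨_, hy⟩
  have hTs : T s = T (θ ξ) - θ (T (θ ξ)) := congrArg Subtype.val hsy
  calc ‖θ ξ‖ = ‖θ (θ ξ - s)‖ := by rw [map_sub, LinearMap.mem_ker.1 hs, hθθ, sub_zero]
    _ ≤ ‖θ ξ - s‖ := norm_symmetricProjection_apply_le hθ _
    _ ≤ K * ‖T (θ ξ - s)‖ := hT _
    _ = K * ‖θ (T (θ ξ))‖ := by rw [map_sub, hTs, sub_sub_cancel]

end Operator

section EuclideanNorm

variable {ι κ : Type*} [Fintype ι] [Fintype κ]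

theorem en_nonneg (x : ι → ℝ) : 0 ≤ en x := Real.sqrt_nonneg _

theorem en_eq_norm (x : ι → ℝ) : en x = ‖WithLp.toLp 2 x‖ := by
  simp [en, EuclideanSpace.norm_eq]

theorem en_comp_le {f : ι → κ} (hf : Function.Injective f) (x : κ → ℝ) : en (x ∘ f) ≤ en x :=
  Real.sqrt_le_sqrt <|
    (Finset.sum_map Finset.univ ⟨f, hf⟩ fun k => x k ^ 2).symm.trans_le <|
      Finset.sum_le_sum_of_subset_of_nonneg (Finset.subset_univ _) fun _ _ _ => sq_nonneg _

theorem en_le_add_of_sum (x : ι ⊕ κ → ℝ) : en x ≤ en (x ∘ Sum.inl) + en (x ∘ Sum.inr) := by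
  simp only [en, Fintype.sum_sum_type, Function.comp_apply]
  refine Real.sqrt_le_iff.2 ⟨by positivity, ?_⟩
  rw [add_sq, Real.sq_sqrt (by positivity), Real.sq_sqrt (by positivity)]
  exact add_le_add_left (le_add_of_nonneg_right (by positivity)) _

theorem en_mulVec_le_opNorm [DecidableEq κ] (A : Matrix ι κ ℝ) (x : κ → ℝ) :
    en (A *ᵥ x) ≤ opNorm A * en x := by
  rw [en_eq_norm, en_eq_norm]
  exact (LinearMap.toContinuousLinearMap (Matrix.toEuclideanLin A)).le_opNorm (WithLp.toLp 2 x)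

theorem abs_det_mul_en_le [DecidableEq ι] (A : Matrix ι ι ℝ) (x : ι → ℝ) :
    |A.det| * en x ≤ opNorm A ^ (Fintype.card ι - 1) * en (A *ᵥ x) := by
  simpa [en_eq_norm, opNorm, Matrix.toEuclideanLin] using norm_det_mul_norm_le
    (LinearMap.toContinuousLinearMap (Matrix.toEuclideanLin A)) (WithLp.toLp 2 x)

theorem IsReg.en_mulVec_le {m : ℕ} {Δ : ℝ} {A : Matrix (Fin m) (Fin m) ℝ} (hA : IsReg Δ A)
    (x : Fin m → ℝ) : en (A *ᵥ x) ≤ Δ * en x :=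
  (en_mulVec_le_opNorm A x).trans (mul_le_mul_of_nonneg_right hA.1 (en_nonneg x))

theorem IsReg.en_le {m : ℕ} {Δ : ℝ} {A : Matrix (Fin m) (Fin m) ℝ} (hA : IsReg Δ A)
    (x : Fin m → ℝ) : en x ≤ Δ * Δ ^ (m - 1) * en (A *ᵥ x) := by
  obtain ⟨hnorm, hdet, hdet_inv⟩ := hA
  have hopNorm : 0 ≤ opNorm A := norm_nonneg _
  have hΔ : 0 ≤ Δ := hopNorm.trans hnorm
  have hen : 0 ≤ en (A *ᵥ x) := en_nonneg _
  calc en x = |A.det|⁻¹ * (|A.det| * en x) := (inv_mul_cancel_left₀ (abs_ne_zero.2 hdet) _).symm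
    _ ≤ |A.det|⁻¹ * (opNorm A ^ (m - 1) * en (A *ᵥ x)) := by
        gcongr ?_ * ?_
        simpa only [Fintype.card_fin] using abs_det_mul_en_le A x
    _ ≤ Δ * (Δ ^ (m - 1) * en (A *ᵥ x)) := by gcongr
    _ = Δ * Δ ^ (m - 1) * en (A *ᵥ x) := (mul_assoc _ _ _).symm

end EuclideanNorm

section Corner

variable {m : ℕ} (j : Corner m)

theorem sel_injective : Function.Injective (sel j) := by
  intro a b h
  unfold sel at h
  split_ifs at h <;> simpa using h

theorem projM_mulVec (x : Idx m → ℝ) : projM j *ᵥ x = x ∘ sel j := by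
  ext i
  simp [projM, Matrix.mulVec, dotProduct]

theorem Th_mulVec_apply (l : ℕ) (x : Fin m → ℝ) (i : Fin m) :
    (Th l *ᵥ x) i = if (i : ℕ) < l then 0 else x i := by
  simp [Th, Matrix.mulVec_diagonal]

theorem Th_mulVec_projM_mulVec (l : ℕ) (x : Idx m → ℝ) :
    Th l *ᵥ (projM j *ᵥ x) = projM j *ᵥ (ThB l *ᵥ x) := by
  rw [projM_mulVec, projM_mulVec]
  ext i
  rw [Th_mulVec_apply, Function.comp_apply, Function.comp_apply, ThB, Matrix.mulVec_diagonal]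
  by_cases hj : j i = 0 <;> simp [sel, hj]

theorem en_projM_mulVec_le (x : Idx m → ℝ) : en (projM j *ᵥ x) ≤ en x := by
  rw [projM_mulVec]
  exact en_comp_le (sel_injective j) x

theorem isSymmetricProjection_toEuclideanLin_Th (l : ℕ) :
    (Matrix.toEuclideanLin (Th l : Matrix (Fin m) (Fin m) ℝ)).IsSymmetricProjection where
  isIdempotentElem := by
    have hTh : Th l * Th l = (Th l : Matrix (Fin m) (Fin m) ℝ) := by
      simp [Th, Matrix.diagonal_mul_diagonal]
    rw [IsIdempotentElem, Module.End.mul_eq_comp, ← Matrix.toLpLin_mul_same, hTh]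
  isSymmetric := Matrix.isSymmetric_toEuclideanLin_iff.2 (Matrix.isHermitian_diagonal _)

theorem en_le_two_mul_of_en_projM_mulVec_le {x : Idx m → ℝ} {c : ℝ}
    (hx : ∀ j : Corner m, en (projM j *ᵥ x) ≤ c) : en x ≤ 2 * c := by
  have hinl : en (x ∘ Sum.inl) ≤ c := projM_mulVec 0 x ▸ hx 0
  have hinr : en (x ∘ Sum.inr) ≤ c := projM_mulVec 1 x ▸ hx 1
  linarith [en_le_add_of_sum x]

end Corner

section EqualRows

variable {m l : ℕ} {J : Matrix (Idx m) (Fin m) ℝ}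

theorem transpose_PiJ_mulVec_of_vecMul_eq (hJ : IsUnit (Jb1 J).det) {y : Fin m → ℝ}
    (hy : y ᵥ* Jb0 J = y ᵥ* Jb1 J) : (PiJ J)ᵀ *ᵥ y = Sum.elim y (-y) := by
  rw [Matrix.mulVec_transpose, PiJ, Matrix.vecMul_fromCols, Matrix.vecMul_one, Matrix.vecMul_neg,
    ← Matrix.vecMul_vecMul, hy, Matrix.vecMul_vecMul, Matrix.mul_nonsing_inv _ hJ,
    Matrix.vecMul_one]

theorem vecMul_Jb0_eq_vecMul_Jb1
    (hrow : ∀ h : Fin m, (h : ℕ) < l → ∀ k, J (Sum.inl h) k = J (Sum.inr h) k)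
    {y : Fin m → ℝ} (hy : Th l *ᵥ y = 0) : y ᵥ* Jb0 J = y ᵥ* Jb1 J := by
  ext k
  simp only [Matrix.vecMul, dotProduct]
  refine Finset.sum_congr rfl fun h _ => ?_
  obtain hh | hh := lt_or_ge (h : ℕ) l
  · simp only [Jb0, Jb1, Matrix.submatrix_apply, id, hrow h hh]
  · have hyh : y h = 0 := by simpa [Th_mulVec_apply, hh.not_gt] using congrFun hy h
    simp only [hyh, zero_mul]

theorem Th_mulVec_projM_mul_transpose_PiJ_mulVec_eq_zero (hJ : IsUnit (Jb1 J).det)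
    (hrow : ∀ h : Fin m, (h : ℕ) < l → ∀ k, J (Sum.inl h) k = J (Sum.inr h) k)
    (j : Corner m) {y : Fin m → ℝ} (hy : Th l *ᵥ y = 0) :
    Th l *ᵥ ((projM j * (PiJ J)ᵀ) *ᵥ y) = 0 := by
  rw [← Matrix.mulVec_mulVec,
    transpose_PiJ_mulVec_of_vecMul_eq hJ (vecMul_Jb0_eq_vecMul_Jb1 hrow hy), projM_mulVec]
  ext i
  have hyi := congrFun hy i
  by_cases hj : j i = 0 <;> simp_all [Th_mulVec_apply, sel]

theorem en_Th_mulVec_le (hJ : IsUnit (Jb1 J).det)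
    (hrow : ∀ h : Fin m, (h : ℕ) < l → ∀ k, J (Sum.inl h) k = J (Sum.inr h) k)
    {Δ : ℝ} {j : Corner m} (hreg : IsReg Δ (projM j * (PiJ J)ᵀ)) (ξ : Fin m → ℝ) :
    en (Th l *ᵥ ξ) ≤
      Δ * Δ ^ (m - 1) * en (Th l *ᵥ ((projM j * (PiJ J)ᵀ) *ᵥ (Th l *ᵥ ξ))) := by
  have hlower (v : EuclideanSpace ℝ (Fin m)) :
      ‖v‖ ≤ Δ * Δ ^ (m - 1) * ‖Matrix.toEuclideanLin (projM j * (PiJ J)ᵀ) v‖ := by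
    rw [Matrix.toLpLin_apply, ← en_eq_norm, ← WithLp.toLp_ofLp 2 v, ← en_eq_norm]
    exact hreg.en_le v.ofLp
  rw [en_eq_norm, en_eq_norm]
  exact norm_symmetricProjection_apply_le_compression
    (isSymmetricProjection_toEuclideanLin_Th l) hlower
    (fun _ hu => congrArg (WithLp.toLp 2) <|
      Th_mulVec_projM_mul_transpose_PiJ_mulVec_eq_zero hJ hrow j (congrArg WithLp.ofLp hu))
    (WithLp.toLp 2 ξ)

end EqualRows

/-- Lemma 5.2 (norm comparison along `Θ̃`). -/
theorem statement13 (m l : ℕ) (hm : 2 ≤ m) (hl0 : 0 < l) (hlm : l ≤ m)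
    (Δ : ℝ) (hΔ : 1 < Δ) :
    ∃ C : ℝ, 0 < C ∧ ∀ J : Matrix (Idx m) (Fin m) ℝ,
      IsUnit (Jb0 J).det → IsUnit (Jb1 J).det →
      (∀ h : Fin m, (h:ℕ) < l → ∀ k, J (Sum.inl h) k = J (Sum.inr h) k) →
      (∀ j : Corner m, IsReg Δ (projM j * (PiJ J).transpose)) →
      ∀ j : Corner m, ∀ ξ : Fin m → ℝ,
        en ((PiJ J).transpose.mulVec ((Th l).mulVec ξ)) ≤
          C * en ((Th l).mulVec ((projM j * (PiJ J).transpose).mulVec ((Th l).mulVec ξ))) ∧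
        C * en ((Th l).mulVec ((projM j * (PiJ J).transpose).mulVec ((Th l).mulVec ξ))) ≤
          C * en ((ThB l).mulVec ((PiJ J).transpose.mulVec ((Th l).mulVec ξ))) := by
  have hC : 0 < 2 * Δ * (Δ * Δ ^ (m - 1)) := by positivity
  refine ⟨_, hC, fun J _ hJ hrow hreg j ξ => ⟨?_, ?_⟩⟩
  · have hupper : en ((PiJ J)ᵀ *ᵥ (Th l *ᵥ ξ)) ≤ 2 * (Δ * en (Th l *ᵥ ξ)) :=
      en_le_two_mul_of_en_projM_mulVec_le fun j => by
        rw [Matrix.mulVec_mulVec]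
        exact (hreg j).en_mulVec_le _
    calc en ((PiJ J)ᵀ *ᵥ (Th l *ᵥ ξ))
        ≤ 2 * (Δ * en (Th l *ᵥ ξ)) := hupper
      _ ≤ 2 * (Δ * (Δ * Δ ^ (m - 1) *
            en (Th l *ᵥ ((projM j * (PiJ J)ᵀ) *ᵥ (Th l *ᵥ ξ))))) := by
          gcongr
          exact en_Th_mulVec_le hJ hrow (hreg j) ξ
      _ = 2 * Δ * (Δ * Δ ^ (m - 1)) *
            en (Th l *ᵥ ((projM j * (PiJ J)ᵀ) *ᵥ (Th l *ᵥ ξ))) := by ring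
  · rw [← Matrix.mulVec_mulVec, Th_mulVec_projM_mulVec]
    exact mul_le_mul_of_nonneg_left (en_projM_mulVec_le j _) hC.le

end SBL
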